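/- With high probability, B_{⌊Cn⌋} has at most (k/2 + 2^{−k} + δ/2)·n edges, and the number of vertices of degree at most k−1 in B_{⌊Cn⌋} is at most εn. -/

import Mathlib

open Finset Filter

namespace RGP

/-- Number of edges of the complete graph on `n` vertices. -/
def numEdges (n : ℕ) : ℕ := n * (n - 1) / 2

/-- An edge of the complete graph on `Fin n` (an unordered pair of distinct vertices). -/
abbrev EdgeType (n : ℕ) := {e : Sym2 (Fin n) // ¬ e.IsDiag}

/-- A uniformly random permutation of the edges of `K_n` is modelled by a bijection
`σ` between positions `Fin (numEdges n)` and edges; `σ i` is the edge `e_{i+1}`. -/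
abbrev Ord (n : ℕ) := Fin (numEdges n) ≃ EdgeType n

/-- Degree of a vertex `v` in a set `S` of edges. -/
def deg {n : ℕ} (S : Finset (Sym2 (Fin n))) (v : Fin n) : ℕ :=
  (S.filter (fun e => v ∈ e)).card

/-- The edge set `{e_1, …, e_m}` of `G_{n,m}` in the random graph process `σ`. -/
def procEdges {n : ℕ} (σ : Ord n) (m : ℕ) : Finset (Sym2 (Fin n)) :=
  (Finset.univ.filter (fun i : Fin (numEdges n) => (i : ℕ) < m)).image (fun i => (σ i).1)

/-- The hitting time `τ_k` for minimum degree at least `k`. -/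
noncomputable def tau {n : ℕ} (k : ℕ) (σ : Ord n) : ℕ :=
  sInf {m | ∀ v : Fin n, k ≤ deg (procEdges σ m) v}

open scoped Classical in
/-- The probability of an event under the uniformly random edge ordering. -/
noncomputable def Pr {n : ℕ} (p : Ord n → Prop) : ℝ :=
  ((Finset.univ : Finset (Ord n)).filter p).card / (Fintype.card (Ord n) : ℝ)

/-- A deterministic online strategy: given the sequence of edges revealed so far
(the last entry being the edge just revealed), decide whether to purchase it. -/
abbrev Strategy (n : ℕ) := List (Sym2 (Fin n)) → Bool

/-- The list of the first `i` revealed edges `e_1, …, e_i`. -/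
def prefixList {n : ℕ} (σ : Ord n) (i : ℕ) : List (Sym2 (Fin n)) :=
  (List.range i).filterMap (fun j => if h : j < numEdges n then some (σ ⟨j, h⟩).1 else none)

/-- `buy st σ i` is the edge set of Builder's graph `B_i`: the edges purchased by the
strategy `st` among `e_1, …, e_i`. -/
def buy {n : ℕ} (st : Strategy n) (σ : Ord n) : ℕ → Finset (Sym2 (Fin n))
  | 0 => ∅
  | i + 1 =>
    if h : i < numEdges n then
      if st (prefixList σ (i + 1)) then insert (σ ⟨i, h⟩).1 (buy st σ i)
      else buy st σ i
    else buy st σ i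

end RGP

namespace RGP

open scoped Classical in
/-- Builder's graph from the first loop of Algorithm 1: `e_i` is purchased if and only if
both of its endpoints have degree less than `k` in `B_{i−1}`, or at least one endpoint
has degree `0` in `G_{n,i−1}`. -/
noncomputable def algB {n : ℕ} (k : ℕ) (σ : Ord n) : ℕ → Finset (Sym2 (Fin n))
  | 0 => ∅
  | i + 1 =>
    if h : i < numEdges n then
      if (∀ v ∈ ((σ ⟨i, h⟩ : EdgeType n) : Sym2 (Fin n)), deg (algB k σ i) v < k) ∨
          (∃ v ∈ ((σ ⟨i, h⟩ : EdgeType n) : Sym2 (Fin n)), deg (procEdges σ i) v = 0) then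
        insert ((σ ⟨i, h⟩ : EdgeType n) : Sym2 (Fin n)) (algB k σ i)
      else algB k σ i
    else algB k σ i

end RGP

namespace RGP

/-! ### Basic facts -/

lemma mem_procEdges {n : ℕ} (σ : Ord n) (m : ℕ) (e : Sym2 (Fin n)) :
    e ∈ procEdges σ m ↔ ∃ i : Fin (numEdges n), (i : ℕ) < m ∧ (σ i).1 = e := by
  simp [procEdges]

lemma deg_mono {n : ℕ} {S T : Finset (Sym2 (Fin n))} (h : S ⊆ T) (v : Fin n) :
    deg S v ≤ deg T v :=
  card_le_card (filter_subset_filter _ h)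

lemma deg_insert {n : ℕ} {S : Finset (Sym2 (Fin n))} {e : Sym2 (Fin n)} (he : e ∉ S)
    (v : Fin n) : deg (insert e S) v = deg S v + if v ∈ e then 1 else 0 := by
  unfold deg
  rw [filter_insert]
  split_ifs with h
  · rw [card_insert_of_notMem]
    simp [he]
  · simp

lemma deg_insert_le {n : ℕ} (S : Finset (Sym2 (Fin n))) (e : Sym2 (Fin n))
    (v : Fin n) : deg (insert e S) v ≤ deg S v + if v ∈ e then 1 else 0 := by
  by_cases he : e ∈ S
  · rw [insert_eq_of_mem he]; exact Nat.le_add_right _ _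
  · exact (deg_insert he v).le

lemma deg_eq_zero {n : ℕ} {S : Finset (Sym2 (Fin n))} {v : Fin n} :
    deg S v = 0 ↔ ∀ e ∈ S, v ∉ e := by
  simp [deg, filter_eq_empty_iff]

lemma procEdges_congr {n : ℕ} {σ σ' : Ord n} {m : ℕ}
    (h : ∀ i : Fin (numEdges n), (i : ℕ) < m → σ i = σ' i) :
    procEdges σ m = procEdges σ' m := by
  ext e
  simp only [mem_procEdges]
  constructor
  · rintro ⟨i, hi, rfl⟩; exact ⟨i, hi, by rw [h i hi]⟩
  · rintro ⟨i, hi, rfl⟩; exact ⟨i, hi, by rw [h i hi]⟩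

lemma algB_congr {n : ℕ} (k : ℕ) {σ σ' : Ord n} {m : ℕ}
    (h : ∀ i : Fin (numEdges n), (i : ℕ) < m → σ i = σ' i) :
    algB k σ m = algB k σ' m := by
  induction m with
  | zero => rfl
  | succ m ih =>
    have h1 := ih (fun i hi => h i (by omega))
    have h2 : procEdges σ m = procEdges σ' m := procEdges_congr (fun i hi => h i (by omega))
    simp only [algB]
    by_cases hm : m < numEdges n
    · have h3 := h ⟨m, hm⟩ (by simp)
      simp only [hm, dif_pos, h3, h1, h2]
    · simp only [hm, dif_neg, not_false_eq_true, h1]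

lemma procEdges_mono {n : ℕ} (σ : Ord n) {a b : ℕ} (h : a ≤ b) :
    procEdges σ a ⊆ procEdges σ b := by
  intro e
  simp only [mem_procEdges]
  rintro ⟨i, hi, rfl⟩
  exact ⟨i, by omega, rfl⟩

lemma procEdges_succ {n : ℕ} (σ : Ord n) (i : Fin (numEdges n)) :
    procEdges σ (i + 1) = insert (σ i).1 (procEdges σ i) := by
  ext e
  simp only [mem_procEdges, mem_insert]
  constructor
  · rintro ⟨j, hj, rfl⟩
    rcases Nat.lt_succ_iff_lt_or_eq.mp hj with h | h
    · exact Or.inr ⟨j, h, rfl⟩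
    · left; rw [Fin.ext h]
  · rintro (rfl | ⟨j, hj, rfl⟩)
    · exact ⟨i, by omega, rfl⟩
    · exact ⟨j, by omega, rfl⟩

lemma notMem_procEdges {n : ℕ} (σ : Ord n) (i : Fin (numEdges n)) {m : ℕ} (hm : m ≤ i) :
    (σ i).1 ∉ procEdges σ m := by
  rw [mem_procEdges]
  rintro ⟨j, hj, h⟩
  have : j = i := σ.injective (Subtype.ext h)
  subst this
  omega

lemma deg_procEdges_succ {n : ℕ} (σ : Ord n) (i : Fin (numEdges n)) (v : Fin n) :
    deg (procEdges σ (i + 1)) v = deg (procEdges σ i) v + if v ∈ (σ i).1 then 1 else 0 := by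
  rw [procEdges_succ, deg_insert (notMem_procEdges σ i le_rfl)]

lemma algB_subset_procEdges {n : ℕ} (k : ℕ) (σ : Ord n) (m : ℕ) :
    algB k σ m ⊆ procEdges σ m := by
  induction m with
  | zero => simp [algB]
  | succ m ih =>
    simp only [algB]
    have h1 := procEdges_mono σ (Nat.le_succ m)
    split_ifs with h2 h3
    · have := procEdges_succ σ ⟨m, h2⟩
      simp only at this
      rw [this]
      exact insert_subset_insert _ ih
    · exact ih.trans h1
    · exact ih.trans h1

lemma algB_mono_succ {n : ℕ} (k : ℕ) (σ : Ord n) (m : ℕ) :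
    algB k σ m ⊆ algB k σ (m + 1) := by
  rw [algB]
  split_ifs
  · exact subset_insert _ _
  · exact subset_rfl
  · exact subset_rfl

lemma card_edgeType (n : ℕ) : Fintype.card (EdgeType n) = numEdges n := by
  have := Sym2.card_subtype_not_diag (α := Fin n)
  rw [Fintype.card_fin, Nat.choose_two_right] at this
  rw [numEdges, ← this]

instance ord_nonempty (n : ℕ) : Nonempty (Ord n) :=
  ⟨(Fintype.equivFinOfCardEq (card_edgeType n)).symm⟩

/-- Swap two positions of an ordering. -/
def swp {n : ℕ} (a b : Fin (numEdges n)) (σ : Ord n) : Ord n := (Equiv.swap a b).trans σ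

lemma swp_apply {n : ℕ} (a b : Fin (numEdges n)) (σ : Ord n) (x : Fin (numEdges n)) :
    swp a b σ x = σ (Equiv.swap a b x) := rfl

lemma swp_swp {n : ℕ} (a b : Fin (numEdges n)) (σ : Ord n) : swp a b (swp a b σ) = σ := by
  ext x; simp [swp]

lemma swp_left {n : ℕ} (a b : Fin (numEdges n)) (σ : Ord n) : swp a b σ a = σ b := by
  simp [swp]

lemma swp_right {n : ℕ} (a b : Fin (numEdges n)) (σ : Ord n) : swp a b σ b = σ a := by
  simp [swp]

lemma swp_of_ne {n : ℕ} {a b x : Fin (numEdges n)} (σ : Ord n) (h1 : x ≠ a) (h2 : x ≠ b) :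
    swp a b σ x = σ x := by
  simp [swp, Equiv.swap_apply_of_ne_of_ne h1 h2]

lemma swp_of_lt {n : ℕ} {a b x : Fin (numEdges n)} (σ : Ord n) (hab : a ≤ b) (h : x < a) :
    swp a b σ x = σ x :=
  swp_of_ne σ h.ne (h.trans_le hab).ne

lemma sum_swp {n : ℕ} (F : Ord n → ℝ) (a b : Fin (numEdges n)) :
    ∑ σ, F (swp a b σ) = ∑ σ, F σ :=
  Equiv.sum_comp (Function.Involutive.toPerm (swp a b) (swp_swp a b)) F

lemma symmetrize {n : ℕ} (F : Ord n → ℝ) (i : Fin (numEdges n)) :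
    ((Ici i).card : ℝ) * ∑ σ, F σ = ∑ σ, ∑ j ∈ Ici i, F (swp i j σ) := by
  rw [sum_comm]
  simp [sum_swp]

end RGP
namespace RGP

/-! ### Variance bound -/

lemma avg_sq {ι : Type*} (s : Finset ι) (f : ι → ℝ) (g μ : ℝ)
    (hg : (s.card : ℝ) * g = ∑ j ∈ s, f j) :
    ∑ j ∈ s, (f j - μ) ^ 2 = s.card * (g - μ) ^ 2 + ∑ j ∈ s, (f j - g) ^ 2 := by
  have h1 : ∀ μ, ∑ j ∈ s, (f j - μ) ^ 2 = ∑ j ∈ s, f j ^ 2 - 2 * μ * (s.card * g) + s.card * μ ^ 2 := by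
    intro μ
    rw [hg, mul_sum, ← nsmul_eq_mul, ← sum_const, ← sum_sub_distrib, ← sum_add_distrib]
    refine sum_congr rfl fun j _ => by ring
  rw [h1, h1]
  ring

lemma variance_bound {n : ℕ} (c : ℝ) (M : ℕ) : ∀ (f : Ord n → ℝ) (μ : ℝ),
    (∀ σ σ' : Ord n, (∀ i : Fin (numEdges n), (i : ℕ) < M → σ i = σ' i) → f σ = f σ') →
    (∀ a b σ, |f (swp a b σ) - f σ| ≤ c) →
    (Fintype.card (Ord n) : ℝ) * μ = ∑ σ, f σ →
    ∑ σ, (f σ - μ) ^ 2 ≤ M * c ^ 2 * Fintype.card (Ord n) := by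
  induction M with
  | zero =>
    intro f μ h1 _ h3
    have h4 : ∀ σ, f σ = μ := by
      intro σ
      have : ∑ τ, f τ = (Fintype.card (Ord n) : ℝ) * f σ := by
        rw [← nsmul_eq_mul, ← card_univ, ← sum_const]
        exact sum_congr rfl fun τ _ => h1 _ _ (by simp)
      rw [this] at h3
      have h5 : (Fintype.card (Ord n) : ℝ) ≠ 0 := by
        exact_mod_cast Fintype.card_ne_zero
      exact (mul_left_cancel₀ h5 h3).symm
    simp [h4]
  | succ M ih =>
    intro f μ h1 h2 h3
    by_cases hM : M < numEdges n
    swap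
    · have := ih f μ (fun σ σ' h => h1 σ σ' (fun i _ => h i (by omega))) h2 h3
      refine this.trans ?_
      gcongr
      simp
    set m : Fin (numEdges n) := ⟨M, hM⟩ with hm
    have hne : (Ici m).Nonempty := ⟨m, by simp⟩
    have hpos : (0 : ℝ) < (Ici m).card := by exact_mod_cast hne.card_pos
    set g : Ord n → ℝ := fun σ => (∑ j ∈ Ici m, f (swp m j σ)) / (Ici m).card with hg
    have hg' : ∀ σ, ((Ici m).card : ℝ) * g σ = ∑ j ∈ Ici m, f (swp m j σ) := by
      intro σ; simp only [hg]; field_simp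
    have key := ih g μ ?_ ?_ ?_
    · have e1 := symmetrize (fun σ => (f σ - μ) ^ 2) m
      have e2 : ∀ σ, ∑ j ∈ Ici m, (f (swp m j σ) - μ) ^ 2 ≤
          (Ici m).card * ((g σ - μ) ^ 2 + c ^ 2) := by
        intro σ
        rw [avg_sq _ _ (g σ) μ (hg' σ)]
        have a1 := avg_sq _ (fun j => f (swp m j σ)) (g σ) (f σ) (hg' σ)
        have a2 : ∑ j ∈ Ici m, (f (swp m j σ) - f σ) ^ 2 ≤ ∑ j ∈ Ici m, c ^ 2 := by
          refine sum_le_sum fun j _ => ?_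
          rw [← sq_abs]
          exact pow_le_pow_left₀ (abs_nonneg _) (h2 _ _ _) 2
        rw [sum_const, nsmul_eq_mul] at a2
        have a3 : 0 ≤ ((Ici m).card : ℝ) * (g σ - f σ) ^ 2 := by positivity
        linarith
      have e3 : ((Ici m).card : ℝ) * ∑ σ, (f σ - μ) ^ 2 ≤
          (Ici m).card * ∑ σ, ((g σ - μ) ^ 2 + c ^ 2) := by
        rw [e1, mul_sum]
        exact sum_le_sum fun σ _ => e2 σ
      have e4 := le_of_mul_le_mul_left e3 hpos
      rw [sum_add_distrib, sum_const, nsmul_eq_mul, card_univ] at e4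
      push_cast
      linarith
    · intro σ σ' h
      simp only [hg]
      congr 1
      have hmap : ∀ (σ σ' : Ord n), (∀ i : Fin (numEdges n), (i : ℕ) < M → σ i = σ' i) →
          ∀ j ∈ Ici m, σ'.symm (σ j) ∈ Ici m := by
        intro σ σ' h j hj
        rw [mem_Ici] at hj ⊢
        by_contra hc
        rw [not_le] at hc
        have h5 := h _ (show ((σ'.symm (σ j) : Fin _) : ℕ) < M from hc)
        rw [Equiv.apply_symm_apply] at h5
        have h6 := σ.injective h5
        rw [h6] at hc
        exact absurd hj (not_le.mpr hc)
      refine sum_bij' (fun j _ => σ'.symm (σ j)) (fun j _ => σ.symm (σ' j))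
        (hmap σ σ' h) (hmap σ' σ (fun i hi => (h i hi).symm)) (by simp) (by simp) ?_
      intro j hj
      apply h1
      intro i hi
      rcases Nat.lt_succ_iff_lt_or_eq.mp hi with hi | hi
      · rw [swp_of_lt σ (mem_Ici.mp hj) hi, swp_of_lt σ' (mem_Ici.mp (hmap σ σ' h j hj)) hi, h i hi]
      · have : i = m := Fin.ext hi
        subst this
        rw [swp_left, swp_left, Equiv.apply_symm_apply]
    · intro a b σ
      have : ∀ j, swp m j (swp a b σ) =
          swp (Equiv.swap m j a) (Equiv.swap m j b) (swp m j σ) := by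
        intro j
        apply Equiv.ext
        intro x
        simp only [swp_apply]
        have := congrArg (fun p => p x)
          (Equiv.mul_swap_eq_swap_mul (Equiv.swap m j) (Equiv.swap m j a) (Equiv.swap m j b))
        simp only [Equiv.Perm.mul_apply, Equiv.swap_apply_self] at this
        rw [this]
      simp only [hg]
      rw [← sub_div, ← sum_sub_distrib, abs_div, abs_of_pos hpos, div_le_iff₀ hpos]
      refine (abs_sum_le_sum_abs _ _).trans ?_
      rw [mul_comm, ← nsmul_eq_mul, ← sum_const]
      refine sum_le_sum fun j _ => ?_
      rw [this]
      exact h2 _ _ _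
    · rw [h3]
      have := symmetrize f m
      apply mul_left_cancel₀ hpos.ne'
      rw [this, mul_sum]
      exact sum_congr rfl fun σ _ => (hg' σ).symm

end RGP
namespace RGP

/-! ### Excess edges -/

/-- The edge at position `i` joins an isolated vertex to a vertex of degree at least `k`. -/
def Exc {n : ℕ} (k : ℕ) (σ : Ord n) (i : Fin (numEdges n)) : Prop :=
  ∃ u v, (σ i).1 = s(u, v) ∧ deg (procEdges σ i) u = 0 ∧ k ≤ deg (procEdges σ i) v

open scoped Classical in
/-- Positions of excess edges among the first `M`. -/
noncomputable def excSet {n : ℕ} (k M : ℕ) (σ : Ord n) : Finset (Fin (numEdges n)) :=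
  univ.filter (fun i => (i : ℕ) < M ∧ Exc k σ i)

lemma mem_excSet {n : ℕ} {k M : ℕ} {σ : Ord n} {i : Fin (numEdges n)} :
    i ∈ excSet k M σ ↔ (i : ℕ) < M ∧ Exc k σ i := by
  simp [excSet]

lemma phi_insert {n : ℕ} (k : ℕ) (S : Finset (Sym2 (Fin n))) (u v : Fin n) (huv : u ≠ v)
    (he : s(u, v) ∉ S) :
    ∑ w, min (deg S w) k + (if deg S u < k then 1 else 0) + (if deg S v < k then 1 else 0) ≤
      ∑ w, min (deg (insert s(u, v) S) w) k := by
  have h1 : (if deg S u < k then 1 else 0) =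
      ∑ w, (if w = u then (if deg S u < k then 1 else 0) else 0) := by simp
  have h2 : (if deg S v < k then 1 else 0) =
      ∑ w, (if w = v then (if deg S v < k then 1 else 0) else 0) := by simp
  rw [h1, h2, ← sum_add_distrib, ← sum_add_distrib]
  refine sum_le_sum fun w _ => ?_
  rw [deg_insert he]
  simp only [Sym2.mem_iff]
  by_cases hu : w = u
  · subst hu
    simp [huv]
    split_ifs <;> omega
  · by_cases hv : w = v
    · subst hv
      simp [hu]
      split_ifs <;> omega
    · simp [hu, hv]

lemma phi_mono {n : ℕ} (k : ℕ) {S T : Finset (Sym2 (Fin n))} (h : S ⊆ T) :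
    ∑ w, min (deg S w) k ≤ ∑ w, min (deg T w) k :=
  sum_le_sum fun w _ => min_le_min_right _ (deg_mono h w)

lemma exists_ends {n : ℕ} (e : EdgeType n) : ∃ u v, u ≠ v ∧ e.1 = s(u, v) := by
  obtain ⟨e, he⟩ := e
  induction e using Sym2.ind with
  | _ u v => exact ⟨u, v, by simpa using he, rfl⟩

lemma edge_bound {n : ℕ} (k : ℕ) (hk : 1 ≤ k) (σ : Ord n) (m : ℕ) :
    2 * (algB k σ m).card ≤ ∑ w, min (deg (algB k σ m) w) k + (excSet k m σ).card := by
  induction m with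
  | zero => simp [algB]
  | succ m ih =>
    have hX : excSet k m σ ⊆ excSet k (m + 1) σ := by
      intro i; simp only [mem_excSet]; rintro ⟨h, h'⟩; exact ⟨by omega, h'⟩
    have hXc := card_le_card hX
    rw [algB]
    split_ifs with h1 h2
    · set i : Fin (numEdges n) := ⟨m, h1⟩ with hi
      obtain ⟨u, v, huv, he⟩ := exists_ends (σ i)
      have hnot : (σ i).1 ∉ algB k σ m := fun h =>
        notMem_procEdges σ i le_rfl (algB_subset_procEdges k σ m h)
      rw [card_insert_of_notMem hnot]
      have hphi := phi_insert k (algB k σ m) u v huv (he ▸ hnot)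
      rw [he] at h2 ⊢
      by_cases hE : Exc k σ i
      · have hX2 : (excSet k m σ).card + 1 ≤ (excSet k (m + 1) σ).card := by
          have : insert i (excSet k m σ) ⊆ excSet k (m + 1) σ := by
            rw [insert_subset_iff]
            exact ⟨mem_excSet.mpr ⟨by simp [hi], hE⟩, hX⟩
          have h3 := card_le_card this
          rwa [card_insert_of_notMem] at h3
          rw [mem_excSet]
          simp [hi]
        have h4 : deg (algB k σ m) u < k ∨ deg (algB k σ m) v < k := by
          rcases h2 with h2 | ⟨w, hw, hw0⟩
          · exact Or.inl (h2 u (by simp))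
          · have := deg_mono (algB_subset_procEdges k σ m) w
            rcases Sym2.mem_iff.mp hw with rfl | rfl
            · left; omega
            · right; omega
        rcases h4 with h4 | h4
        · rw [if_pos h4] at hphi; omega
        · rw [if_pos h4] at hphi; omega
      · have h4 : deg (algB k σ m) u < k ∧ deg (algB k σ m) v < k := by
          rcases h2 with h2 | ⟨w, hw, hw0⟩
          · exact ⟨h2 u (by simp), h2 v (by simp)⟩
          · have hdu := deg_mono (algB_subset_procEdges k σ m) u
            have hdv := deg_mono (algB_subset_procEdges k σ m) v
            rcases Sym2.mem_iff.mp hw with rfl | rfl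
            · refine ⟨by omega, ?_⟩
              by_contra hc
              exact hE ⟨w, v, he, hw0, show k ≤ deg (procEdges σ m) v by omega⟩
            · refine ⟨?_, by omega⟩
              by_contra hc
              exact hE ⟨w, u, by rw [he, Sym2.eq_swap], hw0,
                show k ≤ deg (procEdges σ m) u by omega⟩
        rw [if_pos h4.1, if_pos h4.2] at hphi
        omega
    · omega
    · omega

lemma edge_bound' {n : ℕ} (k : ℕ) (hk : 1 ≤ k) (σ : Ord n) (m : ℕ) :
    2 * (algB k σ m).card ≤ k * n + (excSet k m σ).card := by
  have h1 := edge_bound k hk σ m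
  have h2 : ∑ w, min (deg (algB k σ m) w) k ≤ ∑ _w : Fin n, k :=
    sum_le_sum fun w _ => min_le_right _ _
  simp at h2
  have h3 : n * k = k * n := mul_comm _ _
  omega

lemma procEdges_swp {n : ℕ} (σ : Ord n) (a b : Fin (numEdges n)) (m : ℕ) :
    procEdges σ m ⊆ insert (σ a).1 (procEdges (swp a b σ) m) ∨
    procEdges σ m ⊆ insert (σ b).1 (procEdges (swp a b σ) m) := by
  by_cases hb : (b : ℕ) < m
  · by_cases ha : (a : ℕ) < m
    · left
      intro e he
      rw [mem_insert]; right
      rw [mem_procEdges] at he ⊢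
      obtain ⟨i, hi, rfl⟩ := he
      by_cases h1 : i = a
      · subst h1; exact ⟨b, hb, by rw [swp_right]⟩
      by_cases h2 : i = b
      · subst h2; exact ⟨a, ha, by rw [swp_left]⟩
      exact ⟨i, hi, by rw [swp_of_ne σ h1 h2]⟩
    · right
      intro e he
      rw [mem_insert]
      rw [mem_procEdges] at he ⊢
      obtain ⟨i, hi, rfl⟩ := he
      by_cases h2 : i = b
      · subst h2; exact Or.inl rfl
      have h1 : i ≠ a := by rintro rfl; exact ha hi
      exact Or.inr ⟨i, hi, by rw [swp_of_ne σ h1 h2]⟩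
  · left
    intro e he
    rw [mem_insert]
    rw [mem_procEdges] at he ⊢
    obtain ⟨i, hi, rfl⟩ := he
    by_cases h1 : i = a
    · subst h1; exact Or.inl rfl
    have h2 : i ≠ b := by rintro rfl; exact hb hi
    exact Or.inr ⟨i, hi, by rw [swp_of_ne σ h1 h2]⟩

lemma deg_swp_le {n : ℕ} (σ : Ord n) (a b : Fin (numEdges n)) (m : ℕ) (w : Fin n) :
    deg (procEdges σ m) w ≤ deg (procEdges (swp a b σ) m) w +
      if w ∈ (σ a).1 ∨ w ∈ (σ b).1 then 1 else 0 := by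
  rcases procEdges_swp σ a b m with h | h
  · refine (deg_mono h w).trans ((deg_insert_le _ _ _).trans ?_)
    split_ifs <;> first | omega | tauto
  · refine (deg_mono h w).trans ((deg_insert_le _ _ _).trans ?_)
    split_ifs <;> first | omega | tauto

lemma deg_swp_le' {n : ℕ} (σ : Ord n) (a b : Fin (numEdges n)) (m : ℕ) (w : Fin n) :
    deg (procEdges (swp a b σ) m) w ≤ deg (procEdges σ m) w +
      if w ∈ (σ a).1 ∨ w ∈ (σ b).1 then 1 else 0 := by
  have := deg_swp_le (swp a b σ) a b m w
  rw [swp_swp, swp_left, swp_right] at this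
  simpa only [or_comm] using this

open scoped Classical in
/-- Positions at which the degree of `w` increases from `c`. -/
noncomputable def incAt {n : ℕ} (σ : Ord n) (c : ℕ) (w : Fin n) : Finset (Fin (numEdges n)) :=
  univ.filter (fun i => w ∈ (σ i).1 ∧ deg (procEdges σ i) w = c)

lemma incAt_card {n : ℕ} (σ : Ord n) (c : ℕ) (w : Fin n) : (incAt σ c w).card ≤ 1 := by
  rw [card_le_one]
  have key : ∀ i j : Fin (numEdges n), i < j → w ∈ (σ i).1 → deg (procEdges σ i) w = c →
      deg (procEdges σ j) w ≠ c := by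
    intro i j hij h1 h2
    have := deg_procEdges_succ σ i w
    rw [if_pos h1] at this
    have h3 := deg_mono (procEdges_mono σ (show (i : ℕ) + 1 ≤ j from hij)) w
    omega
  intro i hi j hj
  simp only [incAt, mem_filter, mem_univ, true_and] at hi hj
  rcases lt_trichotomy i j with h | h | h
  · exact absurd hj.2 (key i j h hi.1 hi.2)
  · exact h
  · exact absurd hi.2 (key j i h hj.1 hj.2)

lemma excSet_swp {n : ℕ} (k M : ℕ) (σ : Ord n) (a b : Fin (numEdges n)) :
    (excSet k M σ).card ≤ (excSet k M (swp a b σ)).card + 10 := by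
  obtain ⟨a1, a2, -, ha⟩ := exists_ends (σ a)
  obtain ⟨b1, b2, -, hb⟩ := exists_ends (σ b)
  set W : Finset (Fin n) := {a1, a2, b1, b2} with hW
  have hWc : W.card ≤ 4 := card_le_four
  have hWm : ∀ w, (w ∈ (σ a).1 ∨ w ∈ (σ b).1) → w ∈ W := by
    intro w
    rw [ha, hb, hW]
    simp only [Sym2.mem_iff, mem_insert, mem_singleton]
    tauto
  have hsub : excSet k M σ ⊆ excSet k M (swp a b σ) ∪
      (({a, b} : Finset _) ∪ (W.biUnion (incAt σ 0) ∪ W.biUnion (incAt σ k))) := by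
    intro i hi
    by_contra hc
    simp only [mem_union, not_or, mem_insert, mem_singleton, mem_biUnion, not_exists,
      not_and] at hc
    obtain ⟨h1, ⟨hia, hib⟩, h2, h3⟩ := hc
    rw [mem_excSet] at hi h1
    obtain ⟨hiM, u, v, he, hu, hv⟩ := hi
    apply h1
    refine ⟨hiM, u, v, by rw [swp_of_ne σ hia hib, he], ?_, ?_⟩
    · have h4 : ¬ (u ∈ (σ a).1 ∨ u ∈ (σ b).1) := by
        intro h
        apply h2 u (hWm u h)
        simp [incAt, he, hu]
      have h5 := deg_swp_le' σ a b i u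
      rw [if_neg h4] at h5
      omega
    · have h5 := deg_swp_le σ a b i v
      by_cases h : v ∈ (σ a).1 ∨ v ∈ (σ b).1
      · have h6 : deg (procEdges σ i) v ≠ k := by
          intro h7
          apply h3 v (hWm v h)
          simp [incAt, he, h7]
        rw [if_pos h] at h5
        omega
      · rw [if_neg h] at h5
        omega
  have h0 := card_le_card hsub
  have h1 := card_union_le (excSet k M (swp a b σ))
    (({a, b} : Finset _) ∪ (W.biUnion (incAt σ 0) ∪ W.biUnion (incAt σ k)))
  have h2 := card_union_le ({a, b} : Finset _) (W.biUnion (incAt σ 0) ∪ W.biUnion (incAt σ k))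
  have h3 := card_union_le (W.biUnion (incAt σ 0)) (W.biUnion (incAt σ k))
  have h4 := card_biUnion_le_card_mul W (incAt σ 0) 1 (fun w _ => incAt_card σ 0 w)
  have h5 := card_biUnion_le_card_mul W (incAt σ k) 1 (fun w _ => incAt_card σ k w)
  have h6 := card_le_two (a := a) (b := b)
  omega

lemma excSet_lip {n : ℕ} (k M : ℕ) (a b : Fin (numEdges n)) (σ : Ord n) :
    |((excSet k M (swp a b σ)).card : ℝ) - (excSet k M σ).card| ≤ 10 := by
  have h1 := excSet_swp k M σ a b
  have h2 := excSet_swp k M (swp a b σ) a b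
  rw [swp_swp] at h2
  have h1' : ((excSet k M σ).card : ℝ) ≤ (excSet k M (swp a b σ)).card + 10 := by exact_mod_cast h1
  have h2' : ((excSet k M (swp a b σ)).card : ℝ) ≤ (excSet k M σ).card + 10 := by exact_mod_cast h2
  rw [abs_le]; constructor <;> linarith

lemma excSet_congr {n : ℕ} (k M : ℕ) (σ σ' : Ord n)
    (h : ∀ i : Fin (numEdges n), (i : ℕ) < M → σ i = σ' i) : excSet k M σ = excSet k M σ' := by
  ext i
  rw [mem_excSet, mem_excSet]
  refine and_congr_right fun hi => ?_
  unfold Exc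
  rw [h i hi, procEdges_congr (fun j hj => h j (by omega))]

end RGP
namespace RGP

/-! ### Expected number of excess edges -/

open scoped Classical in
/-- Orderings in which `v` reaches degree `j` while `u` is isolated. -/
noncomputable def vSet {n : ℕ} (u v : Fin n) (j : ℕ) : Finset (Ord n) :=
  univ.filter (fun σ => ∃ m, deg (procEdges σ m) u = 0 ∧ j ≤ deg (procEdges σ m) v)

lemma mem_vSet {n : ℕ} {u v : Fin n} {j : ℕ} {σ : Ord n} : σ ∈ vSet u v j ↔
    ∃ m, deg (procEdges σ m) u = 0 ∧ j ≤ deg (procEdges σ m) v := by simp [vSet]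

open scoped Classical in
/-- Orderings in which the first edge at `u` is `uw`, at which time `v` has degree at least `k`. -/
noncomputable def fSet {n : ℕ} (k : ℕ) (u v w : Fin n) : Finset (Ord n) :=
  univ.filter (fun σ => ∃ i : Fin (numEdges n), (σ i).1 = s(u, w) ∧
    deg (procEdges σ i) u = 0 ∧ k ≤ deg (procEdges σ i) v)

lemma mem_fSet {n : ℕ} {k : ℕ} {u v w : Fin n} {σ : Ord n} : σ ∈ fSet k u v w ↔
    ∃ i : Fin (numEdges n), (σ i).1 = s(u, w) ∧
    deg (procEdges σ i) u = 0 ∧ k ≤ deg (procEdges σ i) v := by simp [fSet]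

lemma exists_step {n : ℕ} (σ : Ord n) (v : Fin n) (j m : ℕ)
    (h : j + 1 ≤ deg (procEdges σ m) v) :
    ∃ i : Fin (numEdges n), (i : ℕ) < m ∧ v ∈ (σ i).1 ∧ deg (procEdges σ i) v = j := by
  induction m with
  | zero => simp [procEdges, deg] at h
  | succ m ih =>
    by_cases h1 : j + 1 ≤ deg (procEdges σ m) v
    · obtain ⟨i, hi, h2⟩ := ih h1
      exact ⟨i, by omega, h2⟩
    · by_cases hm : m < numEdges n
      · have h2 := deg_procEdges_succ σ ⟨m, hm⟩ v
        simp only at h2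
        split_ifs at h2 with h3
        · exact ⟨⟨m, hm⟩, by simp, h3, by simp only; omega⟩
        · omega
      · exfalso
        apply h1
        have : procEdges σ (m + 1) = procEdges σ m := by
          ext e
          simp only [mem_procEdges]
          constructor
          · rintro ⟨i, _, h⟩; exact ⟨i, by omega, h⟩
          · rintro ⟨i, _, h⟩; exact ⟨i, by omega, h⟩
        rwa [this] at h

lemma notMem_of_deg_zero {n : ℕ} {σ : Ord n} {u : Fin n} {m : ℕ}
    (h : deg (procEdges σ m) u = 0) (i : Fin (numEdges n)) (hi : (i : ℕ) < m) :
    u ∉ (σ i).1 :=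
  deg_eq_zero.mp h _ ((mem_procEdges _ _ _).mpr ⟨i, hi, rfl⟩)

lemma incAt_unique {n : ℕ} {σ : Ord n} {c : ℕ} {w : Fin n} {i j : Fin (numEdges n)}
    (hi : w ∈ (σ i).1) (hi' : deg (procEdges σ i) w = c)
    (hj : w ∈ (σ j).1) (hj' : deg (procEdges σ j) w = c) : i = j := by
  have := incAt_card σ c w
  rw [card_le_one] at this
  exact this i (by simp [incAt, hi, hi']) j (by simp [incAt, hj, hj'])

lemma vSet_half {n : ℕ} (u v : Fin n) (j : ℕ) :
    2 * (vSet u v (j + 1)).card ≤ (vSet u v j).card := by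
  have hsub : vSet u v (j + 1) ⊆ vSet u v j := by
    intro σ
    rw [mem_vSet, mem_vSet]
    rintro ⟨m, h1, h2⟩
    exact ⟨m, h1, by omega⟩
  have hmain : (vSet u v (j + 1)).card ≤ (vSet u v j \ vSet u v (j + 1)).card := by
    refine card_le_card_of_forall_subsingleton
      (fun σ σ' => ∃ (i b : Fin (numEdges n)) (w : Fin n), (σ' i).1 = s(u, w) ∧
        (σ' b).1 = s(v, w) ∧ deg (procEdges σ' i) u = 0 ∧ σ = swp i b σ') ?_ ?_
    · intro σ hσ
      rw [mem_vSet] at hσ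
      obtain ⟨m, hu, hv⟩ := hσ
      obtain ⟨i, him, hvi, hdi⟩ := exists_step σ v j m hv
      obtain ⟨w, hw⟩ := Sym2.mem_iff_exists.mp hvi
      have hui := notMem_of_deg_zero hu i him
      have huw : u ≠ w := by
        rintro rfl; apply hui; rw [hw]; simp
      set b : Fin (numEdges n) := σ.symm ⟨s(u, w), by simpa using huw⟩ with hb
      have hσb : (σ b).1 = s(u, w) := by simp [hb]
      have hmb : m ≤ (b : ℕ) := by
        by_contra hc
        apply notMem_of_deg_zero hu b (by omega)
        rw [hσb]; simp
      have hib : i ≤ b := by rw [Fin.le_def]; omega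
      have hpre : procEdges (swp i b σ) i = procEdges σ i :=
        procEdges_congr (fun l hl => swp_of_lt σ hib hl)
      have hui0 : deg (procEdges (swp i b σ) i) u = 0 := by
        rw [hpre]
        have := deg_mono (procEdges_mono σ him.le) u
        omega
      refine ⟨swp i b σ, ?_, i, b, w, by rw [swp_left, hσb], by rw [swp_right, hw], hui0,
        (swp_swp _ _ _).symm⟩
      rw [Finset.mem_sdiff, mem_vSet, mem_vSet]
      refine ⟨⟨i, hui0, by rw [hpre, hdi]⟩, ?_⟩
      rintro ⟨m', h1, h2⟩
      have hm' : m' ≤ i := by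
        by_contra hc
        apply notMem_of_deg_zero h1 i (by omega)
        rw [swp_left, hσb]; simp
      have := deg_mono (procEdges_mono (swp i b σ) hm') v
      rw [hpre, hdi] at this
      omega
    · rintro σ' - σ1 ⟨-, i1, b1, w1, hi1, hb1, hd1, rfl⟩ σ2 ⟨-, i2, b2, w2, hi2, hb2, hd2, rfl⟩
      have hi : i1 = i2 := incAt_unique (w := u) (by rw [hi1]; simp) hd1 (by rw [hi2]; simp) hd2
      subst hi
      have hw : w1 = w2 := by
        rw [hi1] at hi2
        exact Sym2.congr_right.mp hi2
      subst hw
      have hb : b1 = b2 := σ'.injective (Subtype.ext (hb1.trans hb2.symm))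
      subst hb
      rfl
  rw [card_sdiff_of_subset hsub] at hmain
  have := card_le_card hsub
  omega

lemma vSet_card {n : ℕ} (u v : Fin n) (j : ℕ) :
    2 ^ j * (vSet u v j).card ≤ Fintype.card (Ord n) := by
  induction j with
  | zero => simpa using card_le_univ (vSet u v 0)
  | succ j ih =>
    have := Nat.mul_le_mul_left (2 ^ j) (vSet_half u v j)
    rw [pow_succ, mul_assoc]
    omega

lemma fSet_card_le {n : ℕ} (k : ℕ) (u v w : Fin n) (hv : u ≠ v) (hw : u ≠ w) :
    (fSet k u v v).card ≤ (fSet k u v w).card := by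
  set ev : EdgeType n := ⟨s(u, v), by simpa using hv⟩ with hev
  set ew : EdgeType n := ⟨s(u, w), by simpa using hw⟩ with hew
  refine card_le_card_of_injOn (fun σ => σ.trans (Equiv.swap ev ew)) ?_ ?_
  · intro σ hσ
    rw [mem_coe, mem_fSet] at hσ
    obtain ⟨i, hi, hu, hd⟩ := hσ
    rw [mem_coe, mem_fSet]
    have hi' : σ i = ev := Subtype.ext hi
    have hpre : procEdges (σ.trans (Equiv.swap ev ew)) i = procEdges σ i := by
      apply procEdges_congr
      intro l hl
      have h1 := notMem_of_deg_zero hu l hl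
      rw [Equiv.trans_apply, Equiv.swap_apply_of_ne_of_ne]
      · intro h; apply h1; rw [h, hev]; simp
      · intro h; apply h1; rw [h, hew]; simp
    refine ⟨i, ?_, ?_, ?_⟩
    · rw [Equiv.trans_apply, hi', Equiv.swap_apply_left]
    · rw [hpre, hu]
    · rw [hpre]; exact hd
  · intro σ _ σ' _ h
    have := congrArg (fun τ => Equiv.trans τ (Equiv.swap ev ew)) h
    simpa [Equiv.trans_assoc] using this

lemma fSet_card {n : ℕ} (k : ℕ) (u v : Fin n) (hv : u ≠ v) :
    (n - 1) * (fSet k u v v).card ≤ (vSet u v k).card := by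
  have h1 : (n - 1) * (fSet k u v v).card ≤ ∑ w ∈ univ.erase u, (fSet k u v w).card := by
    have : (univ.erase u : Finset (Fin n)).card = n - 1 := by simp
    rw [← this, ← smul_eq_mul, ← sum_const]
    refine sum_le_sum fun w hw => fSet_card_le k u v w hv (ne_of_mem_erase hw).symm
  refine h1.trans ?_
  rw [← card_biUnion]
  · apply card_le_card
    intro σ
    simp only [mem_biUnion, mem_fSet, mem_vSet]
    rintro ⟨w, -, i, -, h2, h3⟩
    exact ⟨i, h2, h3⟩
  · intro w1 _ w2 _ hne
    rw [Function.onFun, disjoint_left]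
    intro σ
    rw [mem_fSet, mem_fSet]
    rintro ⟨i, hi, hu, -⟩ ⟨i', hi', hu', -⟩
    have : i = i' := incAt_unique (w := u) (by rw [hi]; simp) hu (by rw [hi']; simp) hu'
    subst this
    rw [hi] at hi'
    exact hne (Sym2.congr_right.mp hi')

lemma excSet_card_le {n : ℕ} (k M : ℕ) (σ : Ord n) :
    (excSet k M σ).card ≤ ∑ p ∈ (univ : Finset (Fin n)).offDiag,
      if σ ∈ fSet k p.1 p.2 p.2 then 1 else 0 := by
  rw [← card_filter]
  refine card_le_card_of_forall_subsingleton (fun i p => (σ i).1 = s(p.1, p.2)) ?_ ?_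
  · intro i hi
    rw [mem_excSet] at hi
    obtain ⟨-, u, v, he, hu, hv⟩ := hi
    refine ⟨(u, v), ?_, he⟩
    rw [mem_filter, mem_offDiag, mem_fSet]
    refine ⟨⟨mem_univ _, mem_univ _, ?_⟩, i, he, hu, hv⟩
    rintro h
    simp only at h
    subst h
    exact (σ i).2 (by rw [he]; simp)
  · rintro p - i ⟨-, hi⟩ j ⟨-, hj⟩
    exact σ.injective (Subtype.ext (hi.trans hj.symm))

lemma sum_excSet {n : ℕ} (hn : 2 ≤ n) (k M : ℕ) :
    2 ^ k * ∑ σ : Ord n, (excSet k M σ).card ≤ n * Fintype.card (Ord n) := by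
  have h1 : ∑ σ : Ord n, (excSet k M σ).card ≤
      ∑ p ∈ (univ : Finset (Fin n)).offDiag, (fSet k p.1 p.2 p.2).card := by
    refine (sum_le_sum fun σ _ => excSet_card_le k M σ).trans ?_
    rw [sum_comm]
    refine sum_le_sum fun p _ => ?_
    simp
  have h2 : (n - 1) * (2 ^ k * ∑ p ∈ (univ : Finset (Fin n)).offDiag, (fSet k p.1 p.2 p.2).card) ≤
      (n - 1) * (n * Fintype.card (Ord n)) := by
    have h3 : ∀ p ∈ (univ : Finset (Fin n)).offDiag,
        (n - 1) * (2 ^ k * (fSet k p.1 p.2 p.2).card) ≤ Fintype.card (Ord n) := by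
      intro p hp
      rw [mem_offDiag] at hp
      have := Nat.mul_le_mul_left (2 ^ k) (fSet_card k p.1 p.2 hp.2.2)
      have h4 := vSet_card p.1 p.2 k
      calc _ = 2 ^ k * ((n - 1) * (fSet k p.1 p.2 p.2).card) := by ring
        _ ≤ _ := this.trans h4
    rw [mul_sum, mul_sum]
    refine (sum_le_sum h3).trans ?_
    rw [sum_const, offDiag_card]
    simp only [card_univ, Fintype.card_fin, smul_eq_mul]
    have : n * n - n = (n - 1) * n := by
      rw [Nat.sub_mul, one_mul]
    rw [this, mul_assoc]
  have h3 := Nat.le_of_mul_le_mul_left h2 (by omega)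
  exact (Nat.mul_le_mul_left _ h1).trans h3

end RGP
namespace RGP

/-! ### Few vertices of small degree -/

/-- Vertices of degree less than `k` in Builder's graph. -/
noncomputable def lowSet {n : ℕ} (k : ℕ) (σ : Ord n) (i : ℕ) : Finset (Fin n) :=
  univ.filter (fun v => deg (algB k σ i) v < k)

/-- The truncated degree sum of Builder's graph. -/
noncomputable def phi {n : ℕ} (k : ℕ) (σ : Ord n) (i : ℕ) : ℕ :=
  ∑ w, min (deg (algB k σ i) w) k

open scoped Classical in
/-- The exponential supermartingale. -/
noncomputable def wt {n : ℕ} (k : ℕ) (x : ℝ) (i : ℕ) (σ : Ord n) : ℝ :=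
  if x < (lowSet k σ i).card then (3 / 4 : ℝ) ^ phi k σ i else 0

lemma two_numEdges (n : ℕ) : 2 * numEdges n = n * (n - 1) := by
  unfold numEdges
  exact Nat.mul_div_cancel' (Nat.even_mul_pred_self n).two_dvd

lemma wt_step_pointwise {n : ℕ} (k : ℕ) (x : ℝ) (i : Fin (numEdges n)) (σ : Ord n) :
    wt k x (i + 1) σ ≤ wt k x i σ *
      (1 - if (∀ v ∈ (σ i).1, v ∈ lowSet k σ i) then (7 / 16 : ℝ) else 0) := by
  have hsub : lowSet k σ (i + 1) ⊆ lowSet k σ i := by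
    intro v
    simp only [lowSet, mem_filter, mem_univ, true_and]
    intro h
    exact (deg_mono (algB_mono_succ k σ i) v).trans_lt h
  have hphi : phi k σ i ≤ phi k σ (i + 1) := phi_mono k (algB_mono_succ k σ i)
  have hc : ((lowSet k σ (i + 1)).card : ℝ) ≤ (lowSet k σ i).card := by
    exact_mod_cast card_le_card hsub
  unfold wt
  by_cases h1 : x < (lowSet k σ (i + 1)).card
  · rw [if_pos h1, if_pos (h1.trans_le hc)]
    split_ifs with h2
    · have h3 : phi k σ i + 2 ≤ phi k σ (i + 1) := by
        obtain ⟨u, v, huv, he⟩ := exists_ends (σ i)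
        have hu := h2 u (by rw [he]; simp)
        have hv := h2 v (by rw [he]; simp)
        simp only [lowSet, mem_filter, mem_univ, true_and] at hu hv
        have hnot : (σ i).1 ∉ algB k σ i := fun h =>
          notMem_procEdges σ i le_rfl (algB_subset_procEdges k σ i h)
        have hp := phi_insert k (algB k σ i) u v huv (he ▸ hnot)
        rw [if_pos hu, if_pos hv] at hp
        have hB : algB k σ (i + 1) = insert s(u, v) (algB k σ i) := by
          rw [algB, dif_pos i.2, if_pos]
          · rw [he]
          · left
            intro w hw
            rw [he, Sym2.mem_iff] at hw
            rcases hw with rfl | rfl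
            · exact hu
            · exact hv
        unfold phi
        rw [hB]
        omega
      calc (3 / 4 : ℝ) ^ phi k σ (i + 1) ≤ (3 / 4 : ℝ) ^ (phi k σ i + 2) :=
            pow_le_pow_of_le_one (by norm_num) (by norm_num) h3
        _ = _ := by rw [pow_add]; norm_num
    · rw [sub_zero, mul_one]
      exact pow_le_pow_of_le_one (by norm_num) (by norm_num) hphi
  · rw [if_neg h1]
    apply mul_nonneg
    · split_ifs <;> positivity
    · split_ifs <;> norm_num

lemma wt_nonneg {n : ℕ} (k : ℕ) (x : ℝ) (i : ℕ) (σ : Ord n) : 0 ≤ wt k x i σ := by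
  unfold wt; split_ifs <;> positivity

lemma lowSet_congr {n : ℕ} (k : ℕ) {σ σ' : Ord n} {m : ℕ}
    (h : ∀ i : Fin (numEdges n), (i : ℕ) < m → σ i = σ' i) :
    lowSet k σ m = lowSet k σ' m := by
  unfold lowSet; rw [algB_congr k h]

lemma wt_congr {n : ℕ} (k : ℕ) (x : ℝ) {σ σ' : Ord n} {m : ℕ}
    (h : ∀ i : Fin (numEdges n), (i : ℕ) < m → σ i = σ' i) :
    wt k x m σ = wt k x m σ' := by
  unfold wt phi; rw [lowSet_congr k h, algB_congr k h]

lemma count_inside {n : ℕ} (σ : Ord n) (i : Fin (numEdges n)) (U : Finset (Fin n)) :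
    U.card.choose 2 ≤ ((Ici i).filter (fun j => ∀ v ∈ (σ j).1, v ∈ U)).card + i := by
  rw [← Sym2.card_image_offDiag]
  have h1 : U.offDiag.image Sym2.mk.uncurry ⊆
      ((Ici i).filter (fun j => ∀ v ∈ (σ j).1, v ∈ U) ∪ Iio i).image (fun j => (σ j).1) := by
    intro e he
    simp only [mem_image, mem_offDiag] at he
    obtain ⟨⟨a, b⟩, ⟨ha, hb, hab⟩, rfl⟩ := he
    rw [mem_image]
    refine ⟨σ.symm ⟨s(a, b), by simpa using hab⟩, ?_, by simp⟩
    rw [mem_union]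
    rcases le_or_gt i (σ.symm ⟨s(a, b), by simpa using hab⟩) with h | h
    · left
      rw [mem_filter, mem_Ici]
      refine ⟨h, ?_⟩
      intro v hv
      simp only [Equiv.apply_symm_apply, Sym2.mem_iff] at hv
      rcases hv with rfl | rfl
      · exact ha
      · exact hb
    · right; simpa using h
  refine (card_le_card h1).trans (card_image_le.trans ((card_union_le _ _).trans ?_))
  simp

lemma wt_step {n : ℕ} (k : ℕ) (x p : ℝ) (i : Fin (numEdges n))
    (hp : ∀ U : Finset (Fin n), x < U.card → p * numEdges n + i ≤ (U.card.choose 2 : ℝ))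
    (hp0 : 0 ≤ p) :
    ∑ σ : Ord n, wt k x (i + 1) σ ≤ Real.exp (-(7 / 16) * p) * ∑ σ : Ord n, wt k x i σ := by
  have hpos : (0 : ℝ) < (Ici i).card := by
    exact_mod_cast card_pos.mpr ⟨i, by simp⟩
  refine le_of_mul_le_mul_left ?_ hpos
  rw [symmetrize, mul_sum, mul_sum]
  refine sum_le_sum fun σ _ => ?_
  have h1 : ∀ j ∈ Ici i, wt k x (i + 1) (swp i j σ) ≤ wt k x i σ *
      (1 - if (∀ v ∈ (σ j).1, v ∈ lowSet k σ i) then (7 / 16 : ℝ) else 0) := by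
    intro j hj
    have hag : ∀ l : Fin (numEdges n), (l : ℕ) < i → swp i j σ l = σ l :=
      fun l hl => swp_of_lt σ (mem_Ici.mp hj) hl
    have := wt_step_pointwise k x i (swp i j σ)
    rwa [wt_congr k x hag, lowSet_congr k hag, swp_left] at this
  refine (sum_le_sum h1).trans ?_
  rw [← mul_sum, sum_sub_distrib, ← sum_filter, sum_const, sum_const, nsmul_eq_mul, nsmul_eq_mul,
    mul_one]
  by_cases hx : x < (lowSet k σ i).card
  · have h2 := hp _ hx
    have h3 := count_inside σ i (lowSet k σ i)
    have h3' : ((lowSet k σ i).card.choose 2 : ℝ) ≤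
      (((Ici i).filter (fun j => ∀ v ∈ (σ j).1, v ∈ lowSet k σ i)).card : ℝ) + (i : ℕ) := by
      exact_mod_cast h3
    have h4 : ((Ici i).card : ℝ) ≤ numEdges n := by
      have := card_le_univ (Ici i)
      rw [Fintype.card_fin] at this
      exact_mod_cast this
    have h5 : p * (Ici i).card ≤
        (((Ici i).filter (fun j => ∀ v ∈ (σ j).1, v ∈ lowSet k σ i)).card : ℝ) := by
      have := mul_le_mul_of_nonneg_left h4 hp0
      linarith
    have h6 := Real.add_one_le_exp (-(7 / 16) * p)
    have h7 := wt_nonneg k x i σ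
    calc _ ≤ wt k x i σ * ((Ici i).card * (1 + -(7/16) * p)) := by
          gcongr; linarith
      _ ≤ wt k x i σ * ((Ici i).card * Real.exp (-(7 / 16) * p)) := by
          gcongr; linarith
      _ = _ := by ring
  · have : wt k x i σ = 0 := by unfold wt; rw [if_neg hx]
    simp [this]

lemma wt_total {n : ℕ} (k : ℕ) (x p : ℝ) (M : ℕ) (hM : M ≤ numEdges n)
    (hp : ∀ U : Finset (Fin n), x < U.card → p * numEdges n + M ≤ (U.card.choose 2 : ℝ))
    (hp0 : 0 ≤ p) :
    ∑ σ : Ord n, wt k x M σ ≤ Real.exp (-(7 / 16) * p * M) * Fintype.card (Ord n) := by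
  have : ∀ m ≤ M, ∑ σ : Ord n, wt k x m σ ≤
      Real.exp (-(7 / 16) * p * m) * Fintype.card (Ord n) := by
    intro m
    induction m with
    | zero =>
      intro _
      have : ∑ σ : Ord n, wt k x 0 σ ≤ ∑ σ : Ord n, (1 : ℝ) := by
        refine sum_le_sum fun σ _ => ?_
        unfold wt
        split_ifs
        · exact pow_le_one₀ (by norm_num) (by norm_num)
        · norm_num
      simpa using this
    | succ m ih =>
      intro hm
      have h1 := ih (by omega)
      have h2 := wt_step (n := n) k x p ⟨m, by omega⟩ (fun U hU => by
        have := hp U hU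
        have h3 : ((m : ℕ) : ℝ) ≤ M := by exact_mod_cast (by omega : m ≤ M)
        simp only
        linarith) hp0
      simp only at h2
      refine h2.trans ?_
      refine (mul_le_mul_of_nonneg_left h1 (Real.exp_pos _).le).trans ?_
      rw [← mul_assoc, ← Real.exp_add]
      apply le_of_eq
      congr 2
      push_cast
      ring
  exact this M le_rfl

open scoped Classical in
lemma bad_low {n : ℕ} (k : ℕ) (x p : ℝ) (M : ℕ) (hM : M ≤ numEdges n)
    (hp : ∀ U : Finset (Fin n), x < U.card → p * numEdges n + M ≤ (U.card.choose 2 : ℝ))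
    (hp0 : 0 ≤ p) :
    ((univ.filter (fun σ : Ord n => x < (lowSet k σ M).card)).card : ℝ) ≤
      Real.exp (k * n / 3 - (7 / 16) * p * M) * Fintype.card (Ord n) := by
  have h1 := wt_total k x p M hM hp hp0
  have h2 : ((univ.filter (fun σ : Ord n => x < (lowSet k σ M).card)).card : ℝ) *
      (3 / 4 : ℝ) ^ (k * n) ≤ ∑ σ : Ord n, wt k x M σ := by
    unfold wt
    rw [← sum_filter, ← nsmul_eq_mul, ← sum_const]
    refine sum_le_sum fun σ _ => pow_le_pow_of_le_one (by norm_num) (by norm_num) ?_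
    have h2 : phi k σ M ≤ ∑ _w : Fin n, k := sum_le_sum fun w _ => min_le_right _ _
    simpa [mul_comm] using h2
  have h3 : Real.exp (-(k * n / 3 : ℝ)) ≤ (3 / 4 : ℝ) ^ (k * n) := by
    have : Real.exp (-(1 / 3 : ℝ)) ≤ 3 / 4 := by
      have h := Real.add_one_le_exp (1 / 3 : ℝ)
      rw [Real.exp_neg, inv_le_comm₀ (Real.exp_pos _) (by norm_num)]
      linarith
    have h := pow_le_pow_left₀ (Real.exp_pos _).le this (k * n)
    rw [← Real.exp_nat_mul] at h
    refine le_trans (le_of_eq ?_) h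
    congr 1
    push_cast
    ring
  have h4 : ((univ.filter (fun σ : Ord n => x < (lowSet k σ M).card)).card : ℝ) *
      Real.exp (-(k * n / 3 : ℝ)) ≤ Real.exp (-(7 / 16) * p * M) * Fintype.card (Ord n) :=
    (mul_le_mul_of_nonneg_left h3 (by positivity)).trans (h2.trans h1)
  have h5 := mul_le_mul_of_nonneg_right h4 (Real.exp_pos (k * n / 3 : ℝ)).le
  rw [mul_assoc, ← Real.exp_add, neg_add_cancel, Real.exp_zero, mul_one] at h5
  refine h5.trans (le_of_eq ?_)
  rw [sub_eq_add_neg, Real.exp_add, ← neg_mul, ← neg_mul]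
  ring

open scoped Classical in
lemma bad_exc {n : ℕ} (hn : 2 ≤ n) (k M : ℕ) (δ : ℝ) (hδ : 0 < δ) :
    ((univ.filter (fun σ : Ord n =>
      ((2 : ℝ) ^ (-(k : ℤ)) + δ) * n < (excSet k M σ).card)).card : ℝ) * (δ * n) ^ 2 ≤
      M * 10 ^ 2 * Fintype.card (Ord n) := by
  have hK : (0 : ℝ) < Fintype.card (Ord n) := by exact_mod_cast Fintype.card_pos
  set μ : ℝ := (∑ σ : Ord n, ((excSet k M σ).card : ℝ)) / Fintype.card (Ord n) with hμ
  have hv := variance_bound (n := n) 10 M (fun σ => ((excSet k M σ).card : ℝ)) μ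
    (fun σ σ' h => by simp only [excSet_congr k M σ σ' h]) (excSet_lip k M)
    (by rw [hμ, mul_div_cancel₀ _ hK.ne'])
  refine le_trans ?_ hv
  have hμle : μ ≤ (2 : ℝ) ^ (-(k : ℤ)) * n := by
    have h1 : (2 : ℝ) ^ k * ∑ σ : Ord n, ((excSet k M σ).card : ℝ) ≤ n * Fintype.card (Ord n) := by
      exact_mod_cast sum_excSet hn k M
    rw [hμ, div_le_iff₀ hK, zpow_neg, zpow_natCast, mul_assoc, ← div_eq_inv_mul,
      le_div_iff₀ (by positivity), mul_comm]
    exact h1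
  rw [← nsmul_eq_mul, ← sum_const]
  refine le_trans (sum_le_sum fun σ hσ => ?_)
    (sum_le_sum_of_subset_of_nonneg (filter_subset _ _) (fun σ _ _ => sq_nonneg _))
  rw [mem_filter] at hσ
  have := hσ.2
  apply pow_le_pow_left₀ (by positivity)
  linarith

lemma main_bound (k : ℕ) (hk : 2 ≤ k) (δ ε : ℝ) (hδ : 0 < δ) (hε : 0 < ε) (n M : ℕ)
    (hn : 2 ≤ n) (hM : M ≤ numEdges n)
    (hp : ∀ U : Finset (Fin n), ε * n < U.card →
      (9 / 10 * ε ^ 2) * numEdges n + M ≤ (U.card.choose 2 : ℝ)) :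
    1 - M * 10 ^ 2 / (δ * n) ^ 2 - Real.exp (k * n / 3 - (7 / 16) * (9 / 10 * ε ^ 2) * M) ≤
    Pr (fun σ : Ord n =>
        ((algB k σ M).card : ℝ) ≤ ((k : ℝ) / 2 + (2 : ℝ) ^ (-(k : ℤ)) + δ / 2) * n ∧
        ((((Finset.univ : Finset (Fin n)).filter
            (fun v => deg (algB k σ M) v ≤ k - 1)).card : ℝ) ≤ ε * n)) := by
  classical
  have hK : (0 : ℝ) < Fintype.card (Ord n) := by exact_mod_cast Fintype.card_pos
  have hn0 : (0 : ℝ) < n := by exact_mod_cast (by omega : 0 < n)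
  unfold Pr
  rw [le_div_iff₀ hK]
  have hb := bad_low k (ε * n) (9 / 10 * ε ^ 2) M hM hp (by positivity)
  have hc := bad_exc hn k M δ hδ
  rw [← le_div_iff₀ (by positivity)] at hc
  set s1 := univ.filter (fun σ : Ord n =>
      ((2 : ℝ) ^ (-(k : ℤ)) + δ) * n < (excSet k M σ).card)
  set s2 := univ.filter (fun σ : Ord n => ε * n < (lowSet k σ M).card)
  set s3 := univ.filter (fun σ : Ord n =>
        ((algB k σ M).card : ℝ) ≤ ((k : ℝ) / 2 + (2 : ℝ) ^ (-(k : ℤ)) + δ / 2) * n ∧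
        ((((Finset.univ : Finset (Fin n)).filter
            (fun v => deg (algB k σ M) v ≤ k - 1)).card : ℝ) ≤ ε * n)) with hs3
  have hcov : (univ : Finset (Ord n)) ⊆ s3 ∪ (s1 ∪ s2) := by
    intro σ _
    by_contra hcon
    simp only [mem_union, not_or] at hcon
    obtain ⟨h3, h1, h2⟩ := hcon
    apply h3
    simp only [s1, s2, mem_filter, mem_univ, true_and, not_lt] at h1 h2
    simp only [hs3, mem_filter, mem_univ, true_and]
    constructor
    · have h4 : (2 : ℝ) * (algB k σ M).card ≤ k * n + (excSet k M σ).card := by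
        exact_mod_cast edge_bound' k (by omega) σ M
      have h5 : (0 : ℝ) ≤ (2 : ℝ) ^ (-(k : ℤ)) * n := by positivity
      nlinarith
    · have : (Finset.univ : Finset (Fin n)).filter (fun v => deg (algB k σ M) v ≤ k - 1) =
          lowSet k σ M := by
        unfold lowSet
        apply filter_congr
        intro v _
        omega
      rw [this]
      exact h2
  have h1 := card_le_card hcov
  have h2 := card_union_le s3 (s1 ∪ s2)
  have h3 := card_union_le s1 s2
  rw [card_univ] at h1
  have h4 : (Fintype.card (Ord n) : ℝ) ≤ s3.card + s1.card + s2.card := by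
    exact_mod_cast (by omega : Fintype.card (Ord n) ≤ s3.card + s1.card + s2.card)
  have h5 : (M : ℝ) * 10 ^ 2 * Fintype.card (Ord n) / (δ * n) ^ 2 =
    M * 10 ^ 2 / (δ * n) ^ 2 * Fintype.card (Ord n) := by ring
  rw [h5] at hc
  refine le_trans (b := (s3.card : ℝ)) (by linarith) (le_of_eq ?_)
  rw [hs3]
  congr!

lemma Pr_le_one {n : ℕ} (q : Ord n → Prop) : Pr q ≤ 1 := by
  classical
  unfold Pr
  apply div_le_one_of_le₀ _ (by positivity)
  exact_mod_cast card_le_univ _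


/-- Fix an integer `k ≥ 2` and constants `δ > 0`, `0 < ε < δ/(2k)`, and
set `C = k·ε⁻²`. With high probability, Builder's graph `B_{⌊Cn⌋}` (from Algorithm 1)
has at most `(k/2 + 2⁻ᵏ + δ/2)·n` edges and at most `εn` vertices of degree at most
`k − 1`. -/
theorem algB_few_edges (k : ℕ) (hk : 2 ≤ k) (δ ε : ℝ) (hδ : 0 < δ)
    (hε : 0 < ε) (hεδ : ε < δ / (2 * k)) :
    Filter.Tendsto
      (fun n : ℕ => Pr (fun σ : Ord n =>
        ((algB k σ ⌊(k : ℝ) * ε⁻¹ ^ 2 * (n : ℝ)⌋₊).card : ℝ) ≤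
            ((k : ℝ) / 2 + (2 : ℝ) ^ (-(k : ℤ)) + δ / 2) * n ∧
        ((((Finset.univ : Finset (Fin n)).filter
            (fun v => deg (algB k σ ⌊(k : ℝ) * ε⁻¹ ^ 2 * (n : ℝ)⌋₊) v ≤ k - 1)).card : ℝ)
          ≤ ε * n)))
      Filter.atTop (nhds 1) := by
  have hk2 : (2 : ℝ) ≤ k := by exact_mod_cast hk
  set C : ℝ := (k : ℝ) * ε⁻¹ ^ 2 with hC
  have hCpos : 0 < C := by positivity
  have hCε : C * ε ^ 2 = k := by rw [hC]; field_simp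
  have hlim : Tendsto (fun n : ℕ => 1 - 100 * C / δ ^ 2 * (1 / (n : ℝ)) -
      Real.exp (ε ^ 2) * Real.exp (-(1 / 10 * (n : ℝ)))) atTop (nhds 1) := by
    have h1 : Tendsto (fun n : ℕ => 100 * C / δ ^ 2 * (1 / (n : ℝ))) atTop (nhds 0) := by
      have h := (tendsto_one_div_atTop_nhds_zero_nat (𝕜 := ℝ)).const_mul (100 * C / δ ^ 2)
      rwa [mul_zero] at h
    have h2 : Tendsto (fun n : ℕ => Real.exp (ε ^ 2) * Real.exp (-(1 / 10 * (n : ℝ)))) atTop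
        (nhds 0) := by
      have h3 : Tendsto (fun n : ℕ => 1 / 10 * (n : ℝ)) atTop atTop :=
        tendsto_natCast_atTop_atTop.const_mul_atTop (by norm_num)
      simpa using (Real.tendsto_exp_neg_atTop_nhds_zero.comp h3).const_mul (Real.exp (ε ^ 2))
    simpa using (h1.const_sub 1).sub h2
  refine tendsto_of_tendsto_of_tendsto_of_le_of_le' hlim tendsto_const_nhds ?_
    (Eventually.of_forall fun n => Pr_le_one _)
  have hlarge : ∀ A : ℝ, ∀ᶠ n : ℕ in atTop, A ≤ (n : ℝ) := fun A =>
    tendsto_natCast_atTop_atTop.eventually_ge_atTop A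
  filter_upwards [hlarge 2, hlarge (2 * C + 1), hlarge (1 / ε),
    hlarge ((ε / 2 + C) / (1 / 20 * ε ^ 2))] with n hn2 hnC hn1 hnp
  have hn : 2 ≤ n := by exact_mod_cast hn2
  have hn0 : (0 : ℝ) < n := by linarith
  rw [div_le_iff₀ (by positivity)] at hn1 hnp
  have hM1 : ((⌊C * (n : ℝ)⌋₊ : ℕ) : ℝ) ≤ C * n := Nat.floor_le (by positivity)
  have hM2 : C * n < ((⌊C * (n : ℝ)⌋₊ : ℕ) : ℝ) + 1 := Nat.lt_floor_add_one _
  set M : ℕ := ⌊C * (n : ℝ)⌋₊ with hM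
  have hN : 2 * (numEdges n : ℝ) = n * (n - 1) := by
    have h := two_numEdges n
    have h' : (2 : ℝ) * (numEdges n : ℝ) = n * ((n - 1 : ℕ) : ℝ) := by exact_mod_cast h
    rwa [Nat.cast_sub (by omega), Nat.cast_one] at h'
  have hMN : M ≤ numEdges n := by
    have : (M : ℝ) ≤ numEdges n := by nlinarith
    exact_mod_cast this
  refine le_trans ?_ (main_bound k hk δ ε hδ hε n M hn hMN ?_)
  · have a1 : (M : ℝ) * 10 ^ 2 / (δ * n) ^ 2 ≤ 100 * C / δ ^ 2 * (1 / (n : ℝ)) := by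
      calc (M : ℝ) * 10 ^ 2 / (δ * n) ^ 2 ≤ (C * n) * 10 ^ 2 / (δ * n) ^ 2 := by gcongr
        _ = _ := by field_simp; norm_num
    have a2 : Real.exp (k * n / 3 - (7 / 16) * (9 / 10 * ε ^ 2) * M) ≤
        Real.exp (ε ^ 2) * Real.exp (-(1 / 10 * (n : ℝ))) := by
      rw [← Real.exp_add, Real.exp_le_exp]
      have b1 : (k : ℝ) * n - ε ^ 2 ≤ ε ^ 2 * M := by
        have := mul_le_mul_of_nonneg_left hM2.le (sq_nonneg ε)
        have b2 : ε ^ 2 * (C * n) = k * n := by rw [← hCε]; ring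
        linarith
      have b3 : 2 * (n : ℝ) ≤ k * n := by gcongr
      have b4 := sq_nonneg ε
      nlinarith
    linarith
  · intro U hU
    rw [Nat.cast_choose_two]
    have c1 : ε * n * (ε * n - 1) ≤ (U.card : ℝ) * (U.card - 1) := by
      have : 0 ≤ ε * n - 1 := by linarith
      apply mul_le_mul hU.le (by linarith) this (by positivity)
    have c2 : (ε / 2 + C) * n ≤ n * (1 / 20 * ε ^ 2) * n :=
      mul_le_mul_of_nonneg_right hnp hn0.le
    have c3 : (9 / 10 * ε ^ 2) * numEdges n ≤ 9 / 20 * ε ^ 2 * (n * n) := by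
      have : (2 : ℝ) * numEdges n ≤ n * n := by rw [hN]; nlinarith
      have := mul_le_mul_of_nonneg_left this (by positivity : 0 ≤ 9 / 20 * ε ^ 2)
      linarith
    nlinarith

end RGP
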